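/- Let α and β be real numbers with 0 ≤ α ≤ 1/2 and α < β < 1. Then for every real y ≥ 1, y^β − (y − y^((1−β)/(1−α)))^β ≥ (β/2)·y^(α·(1−β)/(1−α)). -/

import Mathlib

/-!
The regret target `R y = y ^ β` is concave, so it lies below its tangent at `y`, and hence
`R y - R (y - x) ≥ R' y * x` for `x ≤ y`. The tail length `x = y ^ ((1 - β) / (1 - α))` is the
solution of `x ^ (1 - α) = y ^ (1 - β)`, which makes the linear gain `R' y * x` equal to
`β * x ^ α`, that is, to `β` times the expert regret.
-/

theorem rpow_le_rpow_add_mul_sub {p y z : ℝ} (hp₀ : 0 ≤ p) (hp₁ : p ≤ 1) (hy : 0 < y)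
    (hz : 0 ≤ z) : z ^ p ≤ y ^ p + p * y ^ (p - 1) * (z - y) := by
  have bernoulli : (1 + (z / y - 1)) ^ p ≤ 1 + p * (z / y - 1) :=
    rpow_one_add_le_one_add_mul_self (by linarith [div_nonneg hz hy.le]) hp₀ hp₁
  calc
    z ^ p = y ^ p * (1 + (z / y - 1)) ^ p := by
      rw [add_sub_cancel, ← Real.mul_rpow hy.le (div_nonneg hz hy.le), mul_div_cancel₀ _ hy.ne']
    _ ≤ y ^ p * (1 + p * (z / y - 1)) := by gcongr
    _ = y ^ p + p * y ^ (p - 1) * (z - y) := by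
      rw [Real.rpow_sub_one hy.ne']
      field_simp

theorem mul_one_sub_div_one_sub {K : Type*} [Field K] {a : K} (ha : a ≠ 1) (b : K) :
    a * (1 - b) / (1 - a) = b - 1 + (1 - b) / (1 - a) := by
  have : 1 - a ≠ 0 := sub_ne_zero.mpr ha.symm
  field_simp
  ring

theorem lookback_tradeoff_general {α β y : ℝ} (hα : α < 1) (hβ₀ : 0 ≤ β) (hαβ : α ≤ β)
    (hβ₁ : β ≤ 1) (hy : 1 ≤ y) :
    β * y ^ (α * (1 - β) / (1 - α)) ≤ y ^ β - (y - y ^ ((1 - β) / (1 - α))) ^ β := by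
  have hy₀ : 0 < y := one_pos.trans_le hy
  have exponent_le_one : (1 - β) / (1 - α) ≤ 1 :=
    div_le_one_of_le₀ (by linarith) (by linarith)
  have tail_le : y ^ ((1 - β) / (1 - α)) ≤ y := Real.rpow_le_self_of_one_le hy exponent_le_one
  have tangent := rpow_le_rpow_add_mul_sub hβ₀ hβ₁ hy₀ (sub_nonneg.mpr tail_le)
  calc
    β * y ^ (α * (1 - β) / (1 - α)) = β * y ^ (β - 1) * y ^ ((1 - β) / (1 - α)) := by
      rw [mul_one_sub_div_one_sub hα.ne, Real.rpow_add hy₀, mul_assoc]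
    _ ≤ y ^ β - (y - y ^ ((1 - β) / (1 - α))) ^ β := by linarith

/-- Property 1 of Proposition 5.2 of the paper: the recursion inequality for
tail length `x(y) = y^((1-β)/(1-α))`. -/
theorem lookback_tradeoff (α β : ℝ) (hα₀ : 0 ≤ α) (hα₁ : α ≤ 1 / 2)
    (hαβ : α < β) (hβ : β < 1) (y : ℝ) (hy : 1 ≤ y) :
    y ^ β - (y - y ^ ((1 - β) / (1 - α))) ^ β ≥
      β / 2 * y ^ (α * (1 - β) / (1 - α)) := by
  have hβ₀ : 0 ≤ β := hα₀.trans hαβ.le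
  refine (lookback_tradeoff_general (hαβ.trans hβ) hβ₀ hαβ.le hβ.le hy).trans' ?_
  gcongr
  exact half_le_self hβ₀
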